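/- As t ↑ T, the ratio ‖f_t ⊗₁ f_t‖ / ⟨f_t ⊗₁ f_t, f_t⟩ converges to 2√5/3, and the ratio (2‖f_t‖² − 1) / ⟨f_t ⊗₁ f_t, f_t⟩ converges to 0. -/

import Mathlib

open MeasureTheory Real Filter Topology

/-- `λ_t := |log(T−t)|/(2α−1)`. -/
noncomputable def lam (T α t : ℝ) : ℝ := |Real.log (T - t)| / (2 * α - 1)

/-- The kernel `f_t`. -/
noncomputable def fker (T α t : ℝ) (u v : ℝ) : ℝ :=
  if u ∈ Set.Icc (0:ℝ) t ∧ v ∈ Set.Icc (0:ℝ) t then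
    (1 / (2 * Real.sqrt (lam T α t))) * (T - max u v) ^ (α - 1) * (T - min u v) ^ (-α)
  else 0

/-- The kernel `g_t`. -/
noncomputable def gker (T α t : ℝ) (u v : ℝ) : ℝ :=
  if u ∈ Set.Icc (0:ℝ) t ∧ v ∈ Set.Icc (0:ℝ) t then
    (T - u) ^ (-α) * (T - v) ^ (-α) *
      ((T - max u v) ^ (2 * α - 1) - (T - t) ^ (2 * α - 1)) / |Real.log (T - t)|
  else 0

/-- `⟨p,q⟩ := ∫_{[0,T]²} p(u,v) q(u,v) du dv`. -/
noncomputable def ip (T : ℝ) (p q : ℝ → ℝ → ℝ) : ℝ :=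
  ∫ u in Set.Icc (0:ℝ) T, ∫ v in Set.Icc (0:ℝ) T, p u v * q u v

/-- `‖p‖² := ⟨p,p⟩`. -/
noncomputable def normSq (T : ℝ) (p : ℝ → ℝ → ℝ) : ℝ := ip T p p

/-- The contraction `(p ⊗₁ q)(x,y) := ∫₀^T p(x,u) q(y,u) du`. -/
noncomputable def contr (T : ℝ) (p q : ℝ → ℝ → ℝ) : ℝ → ℝ → ℝ :=
  fun x y => ∫ u in Set.Icc (0:ℝ) T, p x u * q y u

/-- `b_t := (1/λ_t)·∫₀ᵗ ∫₀ˢ (T−s)^{2α−2}(T−u)^{−2α} du ds`. -/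
noncomputable def bfun (T α t : ℝ) : ℝ :=
  (1 / lam T α t) *
    ∫ s in (0:ℝ)..t, ∫ u in (0:ℝ)..s, (T - s) ^ (2 * α - 2) * (T - u) ^ (-(2 * α))

/-- `A_{t,1}`. -/
noncomputable def A1 (T α t : ℝ) : ℝ :=
  (1 / (lam T α t) ^ 2) *
    ∫ x4 in (0:ℝ)..t, ∫ x3 in (0:ℝ)..x4, ∫ x2 in (0:ℝ)..x3, ∫ x1 in (0:ℝ)..x2,
      (T - x4) ^ (2 * α - 2) * (T - x3) ^ (-1 : ℝ) * (T - x2) ^ (-1 : ℝ) *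
        (T - x1) ^ (-(2 * α))

/-- `A_{t,2}`. -/
noncomputable def A2 (T α t : ℝ) : ℝ :=
  (1 / (2 * (lam T α t) ^ 2)) *
    ∫ x4 in (0:ℝ)..t, ∫ x2 in (0:ℝ)..x4, ∫ x3 in (0:ℝ)..x2, ∫ x1 in (0:ℝ)..x3,
      (T - x4) ^ (2 * α - 2) * (T - x2) ^ (2 * α - 2) * (T - x3) ^ (-(2 * α)) *
        (T - x1) ^ (-(2 * α))

/-!
In the coordinate `x = -log (T - u)`, with half-density weights, `f_t` becomes the Toeplitz kernel
`e^{-b|x - y|} / (2 √λ_t)` with `b = α - 1/2`, on an interval of length `2 b λ_t + log T`. On an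
interval, the contraction of `e^{-b|x - y|}` with itself is its convolution square
`e^{-b|x - y|} (1/b + |x - y|)` up to terms that decay exponentially away from the endpoints. Hence
the three double integrals in question grow linearly in the length of the interval up to bounded
errors, with slopes `1/b`, `3/(2b²)` and `5/(2b³)` given by integrals over the whole line, and the
scaling `1 / (2 √λ_t)` turns these slopes into the limits.
-/

section Kernels

variable {s r : Set ℝ} {P Q P' Q' : ℝ → ℝ → ℝ}

/-- The `L²(s × s)` inner product of two kernels, as an iterated integral. -/
noncomputable def kernelInner (s : Set ℝ) (P Q : ℝ → ℝ → ℝ) : ℝ :=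
  ∫ x in s, ∫ y in s, P x y * Q x y

/-- The contraction `P ⊗₁ Q` of two kernels, with the contracted variable ranging over `s`. -/
noncomputable def kernelContr (s : Set ℝ) (P Q : ℝ → ℝ → ℝ) : ℝ → ℝ → ℝ :=
  fun x y => ∫ u in s, P x u * Q y u

/-- The pullback of a kernel along `φ`, weighted by half densities of `φ' = dφ/dx`; the weights make
it an isometry for `kernelInner` that commutes with `kernelContr`. -/
noncomputable def kernelPullback (φ φ' : ℝ → ℝ) (P : ℝ → ℝ → ℝ) : ℝ → ℝ → ℝ :=
  fun x y => √|φ' x| * √|φ' y| * P (φ x) (φ y)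

lemma kernelInner_congr (hs : MeasurableSet s) (hP : ∀ x ∈ s, ∀ y ∈ s, P x y = P' x y)
    (hQ : ∀ x ∈ s, ∀ y ∈ s, Q x y = Q' x y) : kernelInner s P Q = kernelInner s P' Q' :=
  setIntegral_congr_fun hs fun x hx => setIntegral_congr_fun hs fun y hy => by
    simp only [hP x hx y hy, hQ x hx y hy]

lemma kernelContr_congr (hs : MeasurableSet s) (hP : ∀ x ∈ s, ∀ y ∈ s, P x y = P' x y)
    (hQ : ∀ x ∈ s, ∀ y ∈ s, Q x y = Q' x y) {x y : ℝ} (hx : x ∈ s) (hy : y ∈ s) :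
    kernelContr s P Q x y = kernelContr s P' Q' x y :=
  setIntegral_congr_fun hs fun u hu => by simp only [hP x hx u hu, hQ y hy u hu]

lemma kernelContr_self_comm (s : Set ℝ) (P : ℝ → ℝ → ℝ) (x y : ℝ) :
    kernelContr s P P x y = kernelContr s P P y x := by
  simp only [kernelContr, mul_comm]

lemma kernelInner_smul_smul (s : Set ℝ) (a c : ℝ) (P Q : ℝ → ℝ → ℝ) :
    kernelInner s (a • P) (c • Q) = a * c * kernelInner s P Q := by
  simp only [kernelInner, ← integral_const_mul, Pi.smul_apply, smul_eq_mul]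
  simp only [mul_mul_mul_comm]

lemma kernelContr_smul_smul (s : Set ℝ) (a c : ℝ) (P Q : ℝ → ℝ → ℝ) :
    kernelContr s (a • P) (c • Q) = (a * c) • kernelContr s P Q := by
  ext x y
  simp only [kernelContr, ← integral_const_mul, Pi.smul_apply, smul_eq_mul]
  simp only [mul_mul_mul_comm]

lemma kernelInner_of_subset (hr : MeasurableSet r) (hsr : s ⊆ r)
    (hQ : ∀ x y, ¬(x ∈ s ∧ y ∈ s) → Q x y = 0) : kernelInner r P Q = kernelInner s P Q := by
  have inner_eq (x : ℝ) : ∫ y in r, P x y * Q x y = ∫ y in s, P x y * Q x y :=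
    setIntegral_eq_of_subset_of_forall_sdiff_eq_zero hr hsr fun y hy => by
      rw [hQ x y fun h => hy.2 h.2, mul_zero]
  simp only [kernelInner, inner_eq]
  refine setIntegral_eq_of_subset_of_forall_sdiff_eq_zero hr hsr fun x hx => ?_
  simp only [hQ x _ fun h => hx.2 h.1, mul_zero, integral_zero]

lemma kernelContr_of_subset (hr : MeasurableSet r) (hsr : s ⊆ r)
    (hQ : ∀ x y, ¬(x ∈ s ∧ y ∈ s) → Q x y = 0) : kernelContr r P Q = kernelContr s P Q := by
  ext x y
  refine setIntegral_eq_of_subset_of_forall_sdiff_eq_zero hr hsr fun u hu => ?_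
  rw [hQ y u fun h => hu.2 h.2, mul_zero]

lemma kernelContr_eq_zero (hP : ∀ x y, ¬(x ∈ s ∧ y ∈ s) → P x y = 0)
    (hQ : ∀ x y, ¬(x ∈ s ∧ y ∈ s) → Q x y = 0) {x y : ℝ} (hxy : ¬(x ∈ s ∧ y ∈ s)) :
    kernelContr r P Q x y = 0 := by
  have integrand_eq_zero (u : ℝ) : P x u * Q y u = 0 := by
    rcases not_and_or.1 hxy with hx | hy
    · rw [hP x u fun h => hx h.1, zero_mul]
    · rw [hQ y u fun h => hy h.1, mul_zero]
  simp only [kernelContr, integrand_eq_zero, integral_zero]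

variable {φ φ' : ℝ → ℝ}

lemma kernelInner_image (hs : MeasurableSet s) (hφ : ∀ x ∈ s, HasDerivWithinAt φ (φ' x) s x)
    (hinj : s.InjOn φ) (P Q : ℝ → ℝ → ℝ) :
    kernelInner (φ '' s) P Q =
      kernelInner s (kernelPullback φ φ' P) (kernelPullback φ φ' Q) := by
  have pullback_mul_pullback (x y : ℝ) : kernelPullback φ φ' P x y * kernelPullback φ φ' Q x y =
      |φ' x| * (|φ' y| * (P (φ x) (φ y) * Q (φ x) (φ y))) := by
    rw [← mul_self_sqrt (abs_nonneg (φ' x)), ← mul_self_sqrt (abs_nonneg (φ' y))]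
    simp only [kernelPullback]
    ring
  simp only [kernelInner, integral_image_eq_integral_abs_deriv_smul hs hφ hinj, smul_eq_mul,
    pullback_mul_pullback, integral_const_mul]

lemma kernelPullback_kernelContr_image (hs : MeasurableSet s)
    (hφ : ∀ x ∈ s, HasDerivWithinAt φ (φ' x) s x) (hinj : s.InjOn φ) (P Q : ℝ → ℝ → ℝ) :
    kernelPullback φ φ' (kernelContr (φ '' s) P Q) =
      kernelContr s (kernelPullback φ φ' P) (kernelPullback φ φ' Q) := by
  ext x y
  have pullback_mul_pullback (z : ℝ) : kernelPullback φ φ' P x z * kernelPullback φ φ' Q y z =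
      √|φ' x| * √|φ' y| * (|φ' z| * (P (φ x) (φ z) * Q (φ y) (φ z))) := by
    rw [← mul_self_sqrt (abs_nonneg (φ' z))]
    simp only [kernelPullback]
    ring
  simp only [kernelContr, pullback_mul_pullback, integral_const_mul]
  simp only [kernelPullback, kernelContr, integral_image_eq_integral_abs_deriv_smul hs hφ hinj,
    smul_eq_mul]

lemma abs_kernelInner_sub_kernelInner_le (hs : IsCompact s) {E : ℝ → ℝ → ℝ}
    (hP : Continuous ↿P) (hQ : Continuous ↿Q) (hP' : Continuous ↿P') (hQ' : Continuous ↿Q')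
    (hE : Continuous ↿E)
    (h : ∀ x ∈ s, ∀ y ∈ s, |P x y * Q x y - P' x y * Q' x y| ≤ E x y) :
    |kernelInner s P Q - kernelInner s P' Q'| ≤ ∫ x in s, ∫ y in s, E x y := by
  have integrable {F : ℝ × ℝ → ℝ} (hF : Continuous F) :
      IntegrableOn F (s ×ˢ s) (volume.prod volume) :=
    hF.continuousOn.integrableOn_compact (hs.prod hs)
  have hPQ := integrable (hP.mul hQ)
  have hPQ' := integrable (hP'.mul hQ')
  have hs2 : MeasurableSet (s ×ˢ s) := (hs.prod hs).measurableSet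
  calc |kernelInner s P Q - kernelInner s P' Q'|
      = |∫ z in s ×ˢ s, ((↿P * ↿Q) z - (↿P' * ↿Q') z) ∂volume.prod volume| := by
        rw [integral_sub hPQ hPQ', setIntegral_prod _ hPQ, setIntegral_prod _ hPQ']
        rfl
    _ ≤ ∫ z in s ×ˢ s, ↿E z ∂volume.prod volume :=
        (Real.norm_eq_abs _).symm.trans_le <| norm_integral_le_of_norm_le (integrable hE) <|
          ae_restrict_of_forall_mem hs2 fun z hz => h z.1 hz.1 z.2 hz.2
    _ = ∫ x in s, ∫ y in s, E x y := setIntegral_prod _ (integrable hE)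

end Kernels

section Toeplitz

/-- `Q p q` is `κ (q - p)` up to an error bounded uniformly over all intervals `[p, q]`; here
`Q p q` is typically a double integral over `[p, q]²`. -/
def HasLinearGrowth (Q : ℝ → ℝ → ℝ) (κ : ℝ) : Prop :=
  ∃ M, ∀ ⦃p q : ℝ⦄, p ≤ q → |Q p q - κ * (q - p)| ≤ M

lemma HasLinearGrowth.of_abs_sub_le {Q Q' : ℝ → ℝ → ℝ} {κ C : ℝ} (hQ : HasLinearGrowth Q κ)
    (h : ∀ ⦃p q : ℝ⦄, p ≤ q → |Q' p q - Q p q| ≤ C) : HasLinearGrowth Q' κ :=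
  let ⟨M, hM⟩ := hQ
  ⟨C + M, fun _ _ hpq => (abs_sub_le _ _ _).trans (add_le_add (h hpq) (hM hpq))⟩

variable {g : ℝ → ℝ} {p q : ℝ}

lemma integral_comp_abs_sub (hg : Continuous g) {x : ℝ} (hx : x ∈ Set.Icc p q) :
    ∫ y in p..q, g |x - y| = (∫ s in 0..x - p, g s) + ∫ s in 0..q - x, g s := by
  have intervalIntegrable (a c : ℝ) : IntervalIntegrable (fun y => g |x - y|) volume a c :=
    Continuous.intervalIntegrable (by fun_prop) _ _
  have left : ∫ y in p..x, g |x - y| = ∫ s in 0..x - p, g s := by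
    rw [← sub_self x, ← intervalIntegral.integral_comp_sub_left]
    refine intervalIntegral.integral_congr fun y hy => ?_
    rw [Set.uIcc_of_le hx.1] at hy
    simp only [abs_of_nonneg (sub_nonneg.2 hy.2)]
  have right : ∫ y in x..q, g |x - y| = ∫ s in 0..q - x, g s := by
    rw [← sub_self x, ← intervalIntegral.integral_comp_sub_right]
    refine intervalIntegral.integral_congr fun y hy => ?_
    rw [Set.uIcc_of_le hx.2] at hy
    simp only [abs_sub_comm x y, abs_of_nonneg (sub_nonneg.2 hy.1)]
  rw [← left, ← right,
    intervalIntegral.integral_add_adjacent_intervals (intervalIntegrable _ _)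
      (intervalIntegrable _ _)]

lemma integral_integral_eq_integral_sub_mul (hg : Continuous g) (ℓ : ℝ) :
    ∫ x in 0..ℓ, ∫ s in 0..x, g s = ∫ s in 0..ℓ, (ℓ - s) * g s := by
  have parts := intervalIntegral.integral_mul_deriv_eq_deriv_mul (a := 0) (b := ℓ)
    (fun s _ => (hasDerivAt_id s).const_sub ℓ)
    (fun s _ => (hg.integral_hasStrictDerivAt 0 s).hasDerivAt)
    (continuous_const.intervalIntegrable _ _) (hg.intervalIntegrable _ _)
  simpa using parts.symm

lemma integral_integral_comp_abs_sub (hg : Continuous g) (hpq : p ≤ q) :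
    ∫ x in p..q, ∫ y in p..q, g |x - y| = 2 * ∫ s in 0..q - p, (q - p - s) * g s := by
  have primitive_continuous : Continuous fun x => ∫ s in 0..x, g s :=
    intervalIntegral.continuous_primitive (fun _ _ => hg.intervalIntegrable _ _) 0
  have inner_eq : Set.EqOn (fun x => ∫ y in p..q, g |x - y|)
      (fun x => (∫ s in 0..x - p, g s) + ∫ s in 0..q - x, g s) (Set.uIcc p q) := fun x hx =>
    integral_comp_abs_sub hg (by rwa [Set.uIcc_of_le hpq] at hx)
  rw [intervalIntegral.integral_congr inner_eq, intervalIntegral.integral_add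
    ((primitive_continuous.comp' (by fun_prop)).intervalIntegrable _ _)
    ((primitive_continuous.comp' (by fun_prop)).intervalIntegrable _ _),
    intervalIntegral.integral_comp_sub_right (fun x => ∫ s in 0..x, g s),
    intervalIntegral.integral_comp_sub_left (fun x => ∫ s in 0..x, g s),
    sub_self, sub_self, integral_integral_eq_integral_sub_mul hg, two_mul]

lemma abs_mul_integral_Ioi_sub_le (hg : IntegrableOn g (Set.Ioi 0))
    (hg' : IntegrableOn (fun s => s * g s) (Set.Ioi 0)) {ℓ : ℝ} (hℓ : 0 ≤ ℓ) :
    |ℓ * (∫ s in Set.Ioi 0, g s) - ∫ s in 0..ℓ, (ℓ - s) * g s| ≤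
      ∫ s in Set.Ioi 0, |s * g s| := by
  have near : ∫ s in 0..ℓ, (ℓ - s) * g s =
      ℓ * (∫ s in Set.Ioc 0 ℓ, g s) - ∫ s in Set.Ioc 0 ℓ, s * g s := by
    rw [intervalIntegral.integral_of_le hℓ, ← integral_const_mul,
      ← integral_sub (hg.mono_set Set.Ioc_subset_Ioi_self |>.const_mul ℓ)
        (hg'.mono_set Set.Ioc_subset_Ioi_self)]
    simp only [sub_mul]
  have far : |∫ s in Set.Ioi ℓ, ℓ * g s| ≤ ∫ s in Set.Ioi ℓ, |s * g s| := by
    rw [← Real.norm_eq_abs]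
    refine norm_integral_le_of_norm_le (hg'.mono_set (Set.Ioi_subset_Ioi hℓ)).abs <|
      ae_restrict_of_forall_mem measurableSet_Ioi fun s hs => ?_
    rw [Real.norm_eq_abs, abs_mul, abs_mul]
    gcongr
    exact (Set.mem_Ioi.1 hs).le
  have union {F : ℝ → ℝ} (hF : IntegrableOn F (Set.Ioi 0)) :
      ∫ s in Set.Ioi 0, F s = (∫ s in Set.Ioc 0 ℓ, F s) + ∫ s in Set.Ioi ℓ, F s := by
    rw [← Set.Ioc_union_Ioi_eq_Ioi hℓ, setIntegral_union Set.Ioc_disjoint_Ioi_same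
      measurableSet_Ioi (hF.mono_set Set.Ioc_subset_Ioi_self)
      (hF.mono_set (Set.Ioi_subset_Ioi hℓ))]
  calc |ℓ * (∫ s in Set.Ioi 0, g s) - ∫ s in 0..ℓ, (ℓ - s) * g s|
      = |(∫ s in Set.Ioc 0 ℓ, s * g s) + ∫ s in Set.Ioi ℓ, ℓ * g s| := by
        rw [union hg, near, integral_const_mul]
        ring_nf
    _ ≤ |∫ s in Set.Ioc 0 ℓ, s * g s| + |∫ s in Set.Ioi ℓ, ℓ * g s| := abs_add_le _ _
    _ ≤ (∫ s in Set.Ioc 0 ℓ, |s * g s|) + ∫ s in Set.Ioi ℓ, |s * g s| :=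
        add_le_add abs_integral_le_integral_abs far
    _ = ∫ s in Set.Ioi 0, |s * g s| := (union hg'.abs).symm

/-- On `[p, q]²` the variable `|x - y| = s` has density `2 (q - p - s)`, so the error is bounded
by the first absolute moment of `g`. -/
lemma hasLinearGrowth_kernelInner_of_mul_eq {P Q : ℝ → ℝ → ℝ}
    (hPQ : ∀ x y, P x y * Q x y = g |x - y|) (hgc : Continuous g) (hg : IntegrableOn g (Set.Ioi 0))
    (hg' : IntegrableOn (fun s => s * g s) (Set.Ioi 0)) :
    HasLinearGrowth (fun p q => kernelInner (Set.Icc p q) P Q) (2 * ∫ s in Set.Ioi 0, g s) := by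
  refine ⟨2 * ∫ s in Set.Ioi 0, |s * g s|, fun p q hpq => ?_⟩
  have toeplitz : kernelInner (Set.Icc p q) P Q = 2 * ∫ s in 0..q - p, (q - p - s) * g s := by
    simp only [kernelInner, hPQ, integral_Icc_eq_integral_Ioc,
      ← intervalIntegral.integral_of_le hpq, integral_integral_comp_abs_sub hgc hpq]
  calc |kernelInner (Set.Icc p q) P Q - 2 * (∫ s in Set.Ioi 0, g s) * (q - p)|
      = 2 * |(q - p) * (∫ s in Set.Ioi 0, g s) - ∫ s in 0..q - p, (q - p - s) * g s| := by
        rw [toeplitz, abs_sub_comm, ← abs_two, ← abs_mul, abs_two]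
        ring_nf
    _ ≤ 2 * ∫ s in Set.Ioi 0, |s * g s| := by
        gcongr
        exact abs_mul_integral_Ioi_sub_le hg hg' (sub_nonneg.2 hpq)

end Toeplitz

section ExponentialMoments

variable {r : ℝ}

lemma integral_pow_mul_exp_neg_mul_Ioi (n : ℕ) (hr : 0 < r) :
    ∫ s in Set.Ioi 0, s ^ n * exp (-(r * s)) = n.factorial / r ^ (n + 1) := by
  have gamma := integral_rpow_mul_exp_neg_mul_Ioi (a := n + 1) (by positivity) hr
  simp only [add_sub_cancel_right, rpow_natCast, Gamma_nat_eq_factorial] at gamma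
  rw [gamma, ← Nat.cast_succ, rpow_natCast, one_div, inv_pow, inv_mul_eq_div]

lemma integrableOn_pow_mul_exp_neg_mul_Ioi (n : ℕ) (hr : 0 < r) :
    IntegrableOn (fun s => s ^ n * exp (-(r * s))) (Set.Ioi 0) :=
  Integrable.of_integral_ne_zero <| by
    rw [integral_pow_mul_exp_neg_mul_Ioi n hr]
    positivity

lemma hasLinearGrowth_kernelInner_of_mul_eq_sum_mul_exp {P Q : ℝ → ℝ → ℝ} (hr : 0 < r) {n : ℕ}
    (a : Fin n → ℝ) (hPQ : ∀ x y, P x y * Q x y =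
      (∑ i, a i * |x - y| ^ (i : ℕ)) * exp (-(r * |x - y|))) :
    HasLinearGrowth (fun p q => kernelInner (Set.Icc p q) P Q)
      (2 * ∑ i, a i * ((i : ℕ).factorial / r ^ ((i : ℕ) + 1))) := by
  have expand (k : ℕ) (s : ℝ) : s ^ k * ((∑ i, a i * s ^ (i : ℕ)) * exp (-(r * s))) =
      ∑ i, a i * (s ^ (i + k : ℕ) * exp (-(r * s))) := by
    rw [Finset.sum_mul, Finset.mul_sum]
    exact Finset.sum_congr rfl fun i _ => by ring
  have integrable_term (k : ℕ) (i : Fin n) :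
      IntegrableOn (fun s => a i * (s ^ (i + k : ℕ) * exp (-(r * s)))) (Set.Ioi 0) :=
    (integrableOn_pow_mul_exp_neg_mul_Ioi _ hr).const_mul _
  have integrable (k : ℕ) : IntegrableOn
      (fun s => s ^ k * ((∑ i, a i * s ^ (i : ℕ)) * exp (-(r * s)))) (Set.Ioi 0) := by
    simp only [expand]
    exact integrable_finsetSum _ fun i _ => integrable_term k i
  have integral_eq : ∫ s in Set.Ioi 0, (∑ i, a i * s ^ (i : ℕ)) * exp (-(r * s)) =
      ∑ i, a i * ((i : ℕ).factorial / r ^ ((i : ℕ) + 1)) := by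
    calc ∫ s in Set.Ioi 0, (∑ i, a i * s ^ (i : ℕ)) * exp (-(r * s))
        = ∫ s in Set.Ioi 0, ∑ i, a i * (s ^ (i + 0 : ℕ) * exp (-(r * s))) := by
          simp only [← expand, pow_zero, one_mul]
      _ = ∑ i, a i * ((i : ℕ).factorial / r ^ ((i : ℕ) + 1)) := by
          rw [integral_finsetSum _ fun i _ => integrable_term 0 i]
          simp only [integral_const_mul, integral_pow_mul_exp_neg_mul_Ioi _ hr, add_zero]
  rw [← integral_eq]
  exact hasLinearGrowth_kernelInner_of_mul_eq hPQ (by fun_prop)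
    (by simpa only [pow_zero, one_mul] using integrable 0)
    (by simpa only [pow_one] using integrable 1)

end ExponentialMoments

section ExponentialKernel

variable {b p q x y : ℝ}

/-- The Toeplitz kernel `e^{-b|x - y|}`. -/
noncomputable def expKernel (b x y : ℝ) : ℝ := exp (-(b * |x - y|))

/-- The contraction of `expKernel b` with itself over the whole line, that is, the convolution
square of `e^{-b|·|}` evaluated at `x - y`. -/
noncomputable def expKernelConv (b x y : ℝ) : ℝ := expKernel b x y * (1 / b + |x - y|)

/-- The part of `expKernelConv b` that comes from contracting outside `[p, q]`. -/
noncomputable def expKernelTail (b p q x y : ℝ) : ℝ :=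
  (exp (-(b * (x - p))) * exp (-(b * (y - p))) + exp (-(b * (q - x))) * exp (-(b * (q - y)))) /
    (2 * b)

lemma integral_exp_mul_exp (hb : b ≠ 0) (x y p q : ℝ) :
    ∫ z in p..q, exp (-(b * (x - z))) * exp (-(b * (y - z))) =
      (exp (-(b * (x - q))) * exp (-(b * (y - q))) -
        exp (-(b * (x - p))) * exp (-(b * (y - p)))) / (2 * b) := by
  have deriv_exp (w z : ℝ) :
      HasDerivAt (fun z => exp (-(b * (w - z)))) (exp (-(b * (w - z))) * b) z := by
    simpa using (((hasDerivAt_id z).const_sub w).const_mul b).neg.exp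
  have deriv_primitive (z : ℝ) :
      HasDerivAt (fun z => exp (-(b * (x - z))) * exp (-(b * (y - z))) / (2 * b))
        (exp (-(b * (x - z))) * exp (-(b * (y - z)))) z :=
    (((deriv_exp x z).mul (deriv_exp y z)).div_const (2 * b)).congr_deriv (by field_simp; ring)
  rw [intervalIntegral.integral_eq_sub_of_hasDerivAt (fun z _ => deriv_primitive z)
    (Continuous.intervalIntegrable (by fun_prop) _ _), sub_div]

lemma integral_expKernel_mul_expKernel_left (hb : b ≠ 0) (hpx : p ≤ x) (hxy : x ≤ y) :
    ∫ z in p..x, expKernel b x z * expKernel b y z =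
      (exp (-(b * (y - x))) - exp (-(b * (x - p))) * exp (-(b * (y - p)))) / (2 * b) := by
  trans ∫ z in p..x, exp (-(b * (x - z))) * exp (-(b * (y - z)))
  · refine intervalIntegral.integral_congr fun z hz => ?_
    rw [Set.uIcc_of_le hpx] at hz
    simp only [expKernel, abs_of_nonneg (sub_nonneg.2 hz.2),
      abs_of_nonneg (sub_nonneg.2 (hz.2.trans hxy))]
  · simp [integral_exp_mul_exp hb]

lemma integral_expKernel_mul_expKernel_right (hb : b ≠ 0) (hxy : x ≤ y) (hyq : y ≤ q) :
    ∫ z in y..q, expKernel b x z * expKernel b y z =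
      (exp (-(b * (y - x))) - exp (-(b * (q - x))) * exp (-(b * (q - y)))) / (2 * b) := by
  trans ∫ z in y..q, exp (-(-b * (x - z))) * exp (-(-b * (y - z)))
  · refine intervalIntegral.integral_congr fun z hz => ?_
    rw [Set.uIcc_of_le hyq] at hz
    simp only [expKernel, abs_of_nonpos (sub_nonpos.2 hz.1),
      abs_of_nonpos (sub_nonpos.2 (hxy.trans hz.1))]
    ring_nf
  · rw [integral_exp_mul_exp (neg_ne_zero.2 hb), sub_self, mul_zero, neg_zero, exp_zero]
    field_simp
    ring_nf

lemma kernelContr_expKernel_of_le (hb : b ≠ 0) (hpx : p ≤ x) (hxy : x ≤ y) (hyq : y ≤ q) :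
    kernelContr (Set.Icc p q) (expKernel b) (expKernel b) x y =
      expKernelConv b x y - expKernelTail b p q x y := by
  have intervalIntegrable (a c : ℝ) :
      IntervalIntegrable (fun z => expKernel b x z * expKernel b y z) volume a c :=
    Continuous.intervalIntegrable (by unfold expKernel; fun_prop) _ _
  have middle : ∫ z in x..y, expKernel b x z * expKernel b y z =
      (y - x) * exp (-(b * (y - x))) := by
    rw [← smul_eq_mul, ← intervalIntegral.integral_const]
    refine intervalIntegral.integral_congr fun z hz => ?_
    rw [Set.uIcc_of_le hxy] at hz
    simp only [expKernel, abs_of_nonpos (sub_nonpos.2 hz.1), abs_of_nonneg (sub_nonneg.2 hz.2),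
      ← exp_add]
    ring_nf
  rw [kernelContr, integral_Icc_eq_integral_Ioc,
    ← intervalIntegral.integral_of_le (hpx.trans (hxy.trans hyq)),
    ← intervalIntegral.integral_add_adjacent_intervals (intervalIntegrable p y)
      (intervalIntegrable y q),
    ← intervalIntegral.integral_add_adjacent_intervals (intervalIntegrable p x)
      (intervalIntegrable x y), integral_expKernel_mul_expKernel_left hb hpx hxy, middle,
    integral_expKernel_mul_expKernel_right hb hxy hyq, expKernelConv, expKernel, expKernelTail,
    abs_sub_comm, abs_of_nonneg (sub_nonneg.2 hxy)]
  field_simp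
  ring

lemma kernelContr_expKernel (hb : b ≠ 0) (hx : x ∈ Set.Icc p q) (hy : y ∈ Set.Icc p q) :
    kernelContr (Set.Icc p q) (expKernel b) (expKernel b) x y =
      expKernelConv b x y - expKernelTail b p q x y := by
  rcases le_total x y with hxy | hyx
  · exact kernelContr_expKernel_of_le hb hx.1 hxy hy.2
  · rw [kernelContr_self_comm, kernelContr_expKernel_of_le hb hy.1 hyx hx.2]
    simp only [expKernelConv, expKernel, expKernelTail, abs_sub_comm x y, mul_comm]

lemma expKernel_le_one (hb : 0 ≤ b) (x y : ℝ) : expKernel b x y ≤ 1 :=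
  exp_le_one_iff.2 (neg_nonpos.2 (by positivity))

lemma expKernelConv_le_inv (hb : 0 < b) (x y : ℝ) : expKernelConv b x y ≤ 1 / b := by
  calc expKernelConv b x y = exp (-(b * |x - y|)) * (b * |x - y| + 1) / b := by
        rw [expKernelConv, expKernel]
        field_simp
        ring
    _ ≤ exp (-(b * |x - y|)) * exp (b * |x - y|) / b := by
        gcongr
        exact add_one_le_exp _
    _ = 1 / b := by rw [← exp_add, neg_add_cancel, exp_zero]

lemma expKernelTail_nonneg (hb : 0 ≤ b) (p q x y : ℝ) : 0 ≤ expKernelTail b p q x y := by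
  unfold expKernelTail
  positivity

lemma expKernelTail_le_expKernelConv (hb : b ≠ 0) (hx : x ∈ Set.Icc p q) (hy : y ∈ Set.Icc p q) :
    expKernelTail b p q x y ≤ expKernelConv b x y := by
  rw [← sub_nonneg, ← kernelContr_expKernel hb hx hy]
  exact integral_nonneg fun z => mul_nonneg (exp_nonneg _) (exp_nonneg _)

lemma integral_exp_neg_mul_le_inv (hb : 0 < b) (ℓ : ℝ) :
    ∫ x in 0..ℓ, exp (-(b * x)) ≤ 1 / b := by
  have deriv_primitive (x : ℝ) :
      HasDerivAt (fun x => -exp (-(b * x)) / b) (exp (-(b * x))) x := by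
    have deriv_exp : HasDerivAt (fun x => exp (-(b * x))) (exp (-(b * x)) * -b) x := by
      simpa using ((hasDerivAt_id x).const_mul b).neg.exp
    exact (deriv_exp.neg.div_const b).congr_deriv (by field_simp)
  rw [intervalIntegral.integral_eq_sub_of_hasDerivAt (fun x _ => deriv_primitive x)
    (Continuous.intervalIntegrable (by fun_prop) _ _), mul_zero, neg_zero, exp_zero, ← sub_div]
  gcongr
  linarith [exp_pos (-(b * ℓ))]

lemma integral_integral_expKernelTail_le (hb : 0 < b) (hpq : p ≤ q) :
    ∫ x in Set.Icc p q, ∫ y in Set.Icc p q, expKernelTail b p q x y ≤ 1 / b ^ 3 := by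
  set J := ∫ x in 0..q - p, exp (-(b * x))
  have left : ∫ x in p..q, exp (-(b * (x - p))) = J := by
    rw [intervalIntegral.integral_comp_sub_right (fun x => exp (-(b * x))), sub_self]
  have right : ∫ x in p..q, exp (-(b * (q - x))) = J := by
    rw [intervalIntegral.integral_comp_sub_left (fun x => exp (-(b * x))), sub_self]
  have intervalIntegrable_left (c : ℝ) :
      IntervalIntegrable (fun x => exp (-(b * (x - p))) * c) volume p q :=
    Continuous.intervalIntegrable (by fun_prop) _ _
  have intervalIntegrable_right (c : ℝ) :
      IntervalIntegrable (fun x => exp (-(b * (q - x))) * c) volume p q :=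
    Continuous.intervalIntegrable (by fun_prop) _ _
  have J_nonneg : 0 ≤ J :=
    intervalIntegral.integral_nonneg (sub_nonneg.2 hpq) fun _ _ => (exp_pos _).le
  calc ∫ x in Set.Icc p q, ∫ y in Set.Icc p q, expKernelTail b p q x y
      = ∫ x in p..q, ∫ y in p..q, expKernelTail b p q x y := by
        simp only [integral_Icc_eq_integral_Ioc, ← intervalIntegral.integral_of_le hpq]
    _ = (J * J + J * J) / (2 * b) := by
        have inner_eq (x : ℝ) : ∫ y in p..q, expKernelTail b p q x y =
            (exp (-(b * (x - p))) * J + exp (-(b * (q - x))) * J) / (2 * b) := by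
          simp only [expKernelTail, intervalIntegral.integral_div]
          rw [intervalIntegral.integral_add (Continuous.intervalIntegrable (by fun_prop) _ _)
            (Continuous.intervalIntegrable (by fun_prop) _ _),
            intervalIntegral.integral_const_mul, intervalIntegral.integral_const_mul, left, right]
        simp only [inner_eq, intervalIntegral.integral_div]
        rw [intervalIntegral.integral_add (intervalIntegrable_left J) (intervalIntegrable_right J),
          intervalIntegral.integral_mul_const, intervalIntegral.integral_mul_const, left, right]
    _ ≤ (1 / b * (1 / b) + 1 / b * (1 / b)) / (2 * b) := by
        gcongr <;> exact integral_exp_neg_mul_le_inv hb _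
    _ = 1 / b ^ 3 := by
        field_simp
        norm_num

lemma continuous_expKernel (b : ℝ) : Continuous ↿(expKernel b) := by
  unfold expKernel Function.HasUncurry.uncurry
  fun_prop

lemma continuous_expKernelConv (b : ℝ) : Continuous ↿(expKernelConv b) := by
  unfold expKernelConv expKernel Function.HasUncurry.uncurry
  fun_prop

lemma continuous_expKernelTail (b p q : ℝ) : Continuous ↿(expKernelTail b p q) := by
  unfold expKernelTail Function.HasUncurry.uncurry
  fun_prop

lemma exp_neg_two_mul_mul_abs_sub (b x y : ℝ) :
    exp (-(2 * b * |x - y|)) = expKernel b x y * expKernel b x y := by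
  rw [expKernel, ← exp_add]
  ring_nf

lemma hasLinearGrowth_kernelInner_expKernel (hb : 0 < b) :
    HasLinearGrowth (fun p q => kernelInner (Set.Icc p q) (expKernel b) (expKernel b)) (1 / b) := by
  convert hasLinearGrowth_kernelInner_of_mul_eq_sum_mul_exp (r := 2 * b) (by positivity) ![1]
    (P := expKernel b) (Q := expKernel b) fun x y => ?_ using 1
  · simp [field]
  · simp [exp_neg_two_mul_mul_abs_sub]

lemma hasLinearGrowth_kernelInner_expKernelConv_expKernel (hb : 0 < b) :
    HasLinearGrowth (fun p q => kernelInner (Set.Icc p q) (expKernelConv b) (expKernel b))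
      (3 / (2 * b ^ 2)) := by
  convert hasLinearGrowth_kernelInner_of_mul_eq_sum_mul_exp (r := 2 * b) (by positivity)
    ![1 / b, 1] (P := expKernelConv b) (Q := expKernel b) fun x y => ?_ using 1
  · simp only [Fin.sum_univ_two, Matrix.cons_val, Fin.val_zero, Fin.val_one,
      Nat.factorial_zero, Nat.factorial_one, Nat.cast_one]
    field_simp
    ring
  · simp only [expKernelConv, exp_neg_two_mul_mul_abs_sub, Fin.sum_univ_two, Matrix.cons_val_zero,
      Matrix.cons_val_one, Fin.val_zero, Fin.val_one]
    ring

lemma hasLinearGrowth_kernelInner_expKernelConv (hb : 0 < b) :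
    HasLinearGrowth (fun p q => kernelInner (Set.Icc p q) (expKernelConv b) (expKernelConv b))
      (5 / (2 * b ^ 3)) := by
  convert hasLinearGrowth_kernelInner_of_mul_eq_sum_mul_exp (r := 2 * b) (by positivity)
    ![1 / b ^ 2, 2 / b, 1] (P := expKernelConv b) (Q := expKernelConv b) fun x y => ?_ using 1
  · simp only [Fin.sum_univ_three, Matrix.cons_val, Fin.val_zero, Fin.val_one, Fin.val_two,
      Nat.factorial_zero, Nat.factorial_one, Nat.factorial_two, Nat.cast_one, Nat.cast_ofNat]
    field_simp
    ring
  · simp only [expKernelConv, exp_neg_two_mul_mul_abs_sub, Fin.sum_univ_three, Matrix.cons_val,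
      Fin.val_zero, Fin.val_one, Fin.val_two]
    ring

lemma hasLinearGrowth_kernelInner_kernelContr_expKernel (hb : 0 < b) :
    HasLinearGrowth (fun p q => kernelInner (Set.Icc p q)
      (kernelContr (Set.Icc p q) (expKernel b) (expKernel b)) (expKernel b)) (3 / (2 * b ^ 2)) := by
  refine (hasLinearGrowth_kernelInner_expKernelConv_expKernel hb).of_abs_sub_le
    (C := 1 / b ^ 3) fun p q hpq => ?_
  rw [kernelInner_congr measurableSet_Icc (P' := expKernelConv b - expKernelTail b p q)
    (fun x hx y hy => kernelContr_expKernel hb.ne' hx hy) (fun _ _ _ _ => rfl)]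
  refine (abs_kernelInner_sub_kernelInner_le isCompact_Icc
    ((continuous_expKernelConv b).sub (continuous_expKernelTail b p q)) (continuous_expKernel b)
    (continuous_expKernelConv b) (continuous_expKernel b) (continuous_expKernelTail b p q)
    fun x _ y _ => ?_).trans (integral_integral_expKernelTail_le hb hpq)
  calc |(expKernelConv b x y - expKernelTail b p q x y) * expKernel b x y -
        expKernelConv b x y * expKernel b x y|
      = expKernelTail b p q x y * expKernel b x y := by
        rw [← sub_mul, sub_sub_cancel_left, neg_mul, abs_neg, abs_of_nonneg]
        exact mul_nonneg (expKernelTail_nonneg hb.le p q x y) (exp_nonneg _)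
    _ ≤ expKernelTail b p q x y :=
        mul_le_of_le_one_right (expKernelTail_nonneg hb.le p q x y) (expKernel_le_one hb.le x y)

lemma abs_sq_expKernelConv_sub_expKernelTail_sub_sq_le (hb : 0 < b) (hx : x ∈ Set.Icc p q)
    (hy : y ∈ Set.Icc p q) :
    |(expKernelConv b x y - expKernelTail b p q x y) ^ 2 - expKernelConv b x y ^ 2| ≤
      2 / b * expKernelTail b p q x y := by
  have tail_nonneg := expKernelTail_nonneg hb.le p q x y
  have tail_le_conv := expKernelTail_le_expKernelConv hb.ne' hx hy
  have conv_le := expKernelConv_le_inv hb x y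
  calc |(expKernelConv b x y - expKernelTail b p q x y) ^ 2 - expKernelConv b x y ^ 2|
      = (2 * expKernelConv b x y - expKernelTail b p q x y) * expKernelTail b p q x y := by
        rw [abs_sub_comm, sq_sub_sq, sub_sub_cancel, abs_of_nonneg (by nlinarith)]
        ring
    _ ≤ 2 / b * expKernelTail b p q x y := by
        gcongr
        linarith [two_mul (1 / b), mul_one_div 2 b]

lemma hasLinearGrowth_kernelInner_kernelContr_kernelContr_expKernel (hb : 0 < b) :
    HasLinearGrowth (fun p q => kernelInner (Set.Icc p q)
      (kernelContr (Set.Icc p q) (expKernel b) (expKernel b))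
      (kernelContr (Set.Icc p q) (expKernel b) (expKernel b))) (5 / (2 * b ^ 3)) := by
  refine (hasLinearGrowth_kernelInner_expKernelConv hb).of_abs_sub_le
    (C := 2 / b * (1 / b ^ 3)) fun p q hpq => ?_
  have contr_eq : ∀ x ∈ Set.Icc p q, ∀ y ∈ Set.Icc p q,
      kernelContr (Set.Icc p q) (expKernel b) (expKernel b) x y =
        (expKernelConv b - expKernelTail b p q) x y :=
    fun x hx y hy => kernelContr_expKernel hb.ne' hx hy
  have continuous_contr : Continuous ↿(expKernelConv b - expKernelTail b p q) :=
    (continuous_expKernelConv b).sub (continuous_expKernelTail b p q)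
  calc |kernelInner (Set.Icc p q) (kernelContr (Set.Icc p q) (expKernel b) (expKernel b))
          (kernelContr (Set.Icc p q) (expKernel b) (expKernel b)) -
        kernelInner (Set.Icc p q) (expKernelConv b) (expKernelConv b)|
      ≤ ∫ x in Set.Icc p q, ∫ y in Set.Icc p q, 2 / b * expKernelTail b p q x y := by
        rw [kernelInner_congr measurableSet_Icc contr_eq contr_eq]
        refine abs_kernelInner_sub_kernelInner_le isCompact_Icc continuous_contr continuous_contr
          (continuous_expKernelConv b) (continuous_expKernelConv b)
          (continuous_const.mul (continuous_expKernelTail b p q)) fun x hx y hy => ?_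
        simpa only [Pi.sub_apply, ← sq] using
          abs_sq_expKernelConv_sub_expKernelTail_sub_sq_le hb hx hy
    _ ≤ 2 / b * (1 / b ^ 3) := by
        simp only [integral_const_mul]
        gcongr
        exact integral_integral_expKernelTail_le hb hpq

end ExponentialKernel

section LogCoordinates

variable {T α t x y : ℝ} {P Q : ℝ → ℝ → ℝ}

/-- The inverse of the logarithmic coordinate `u ↦ -log (T - u)` on `u < T`. -/
noncomputable def logCoord (T x : ℝ) : ℝ := T - exp (-x)

/-- The interval `[0, t]` in the coordinate `-log (T - u)`. -/
noncomputable def logInterval (T t : ℝ) : Set ℝ := Set.Icc (-log T) (-log (T - t))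

lemma measurableSet_logInterval (T t : ℝ) : MeasurableSet (logInterval T t) := measurableSet_Icc

lemma hasDerivAt_logCoord (T x : ℝ) : HasDerivAt (logCoord T) (exp (-x)) x := by
  have deriv_exp : HasDerivAt (fun x => exp (-x)) (-exp (-x)) x := by
    simpa using (hasDerivAt_neg x).exp
  exact (deriv_exp.const_sub T).congr_deriv (neg_neg _)

lemma strictMono_logCoord (T : ℝ) : StrictMono (logCoord T) := fun _ _ hxy =>
  sub_lt_sub_left (exp_lt_exp.2 (neg_lt_neg hxy)) T

lemma logCoord_neg_log (ht : t < T) : logCoord T (-log (T - t)) = t := by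
  rw [logCoord, neg_neg, exp_log (sub_pos.2 ht), sub_sub_cancel]

lemma logCoord_mem_Icc_iff (hT : 0 < T) (ht : t < T) :
    logCoord T x ∈ Set.Icc 0 t ↔ x ∈ logInterval T t := by
  have zero_eq : logCoord T (-log T) = 0 := by simpa only [sub_zero] using logCoord_neg_log hT
  rw [logInterval, Set.mem_Icc, Set.mem_Icc, ← (strictMono_logCoord T).le_iff_le (a := -log T),
    ← (strictMono_logCoord T).le_iff_le (a := x), zero_eq, logCoord_neg_log ht]

lemma image_logCoord_logInterval (hT : 0 < T) (ht : t < T) :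
    logCoord T '' logInterval T t = Set.Icc 0 t := by
  refine Set.Subset.antisymm ?_ fun u hu => ?_
  · rintro _ ⟨x, hx, rfl⟩
    exact (logCoord_mem_Icc_iff hT ht).2 hx
  · have u_eq := logCoord_neg_log (hu.2.trans_lt ht)
    exact ⟨-log (T - u), (logCoord_mem_Icc_iff hT ht).1 (u_eq.symm ▸ hu), u_eq⟩

/-- The kernel `P` in the coordinate `-log (T - u)`, with the half-density weights that preserve
`ip` and `contr`. -/
noncomputable def logPullback (T : ℝ) (P : ℝ → ℝ → ℝ) : ℝ → ℝ → ℝ :=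
  kernelPullback (logCoord T) (fun x => exp (-x)) P

lemma ip_eq_kernelInner_logPullback (hT : 0 < T) (ht : t < T)
    (hQ : ∀ u v, ¬(u ∈ Set.Icc 0 t ∧ v ∈ Set.Icc 0 t) → Q u v = 0) :
    ip T P Q = kernelInner (logInterval T t) (logPullback T P) (logPullback T Q) := by
  calc ip T P Q = kernelInner (Set.Icc 0 T) P Q := rfl
    _ = kernelInner (Set.Icc 0 t) P Q :=
        kernelInner_of_subset measurableSet_Icc (Set.Icc_subset_Icc_right ht.le) hQ
    _ = kernelInner (logInterval T t) (logPullback T P) (logPullback T Q) := by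
        rw [← image_logCoord_logInterval hT ht]
        exact kernelInner_image (measurableSet_logInterval T t)
          (fun x _ => (hasDerivAt_logCoord T x).hasDerivWithinAt)
          (strictMono_logCoord T).injective.injOn P Q

lemma logPullback_contr (hT : 0 < T) (ht : t < T)
    (hQ : ∀ u v, ¬(u ∈ Set.Icc 0 t ∧ v ∈ Set.Icc 0 t) → Q u v = 0) :
    logPullback T (contr T P Q) =
      kernelContr (logInterval T t) (logPullback T P) (logPullback T Q) := by
  calc logPullback T (contr T P Q) = logPullback T (kernelContr (Set.Icc 0 T) P Q) := rfl
    _ = logPullback T (kernelContr (Set.Icc 0 t) P Q) := by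
        rw [kernelContr_of_subset measurableSet_Icc (Set.Icc_subset_Icc_right ht.le) hQ]
    _ = kernelContr (logInterval T t) (logPullback T P) (logPullback T Q) := by
        rw [← image_logCoord_logInterval hT ht]
        exact kernelPullback_kernelContr_image (measurableSet_logInterval T t)
          (fun x _ => (hasDerivAt_logCoord T x).hasDerivWithinAt)
          (strictMono_logCoord T).injective.injOn P Q

lemma fker_comm (T α t u v : ℝ) : fker T α t u v = fker T α t v u := by
  simp only [fker, max_comm, min_comm, and_comm]

lemma fker_eq_zero {u v : ℝ} (huv : ¬(u ∈ Set.Icc 0 t ∧ v ∈ Set.Icc 0 t)) :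
    fker T α t u v = 0 :=
  if_neg huv

lemma contr_fker_eq_zero {u v : ℝ} (huv : ¬(u ∈ Set.Icc 0 t ∧ v ∈ Set.Icc 0 t)) :
    contr T (fker T α t) (fker T α t) u v = 0 :=
  kernelContr_eq_zero (fun _ _ => fker_eq_zero) (fun _ _ => fker_eq_zero) huv

lemma sqrt_exp_mul_sqrt_exp_mul_rpow (α x y : ℝ) :
    √(exp (-x)) * √(exp (-y)) * (exp (-y) ^ (α - 1) * exp (-x) ^ (-α)) =
      exp (-((α - 1 / 2) * (y - x))) := by
  simp only [← exp_half, ← exp_mul, ← exp_add]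
  ring_nf

lemma logPullback_fker_of_le (hT : 0 < T) (ht : t < T) (hx : x ∈ logInterval T t)
    (hy : y ∈ logInterval T t) (hxy : x ≤ y) :
    logPullback T (fker T α t) x y =
      ((1 / (2 * √(lam T α t))) • expKernel (α - 1 / 2)) x y := by
  have hle : logCoord T x ≤ logCoord T y := (strictMono_logCoord T).monotone hxy
  have hmem := And.intro ((logCoord_mem_Icc_iff hT ht).2 hx) ((logCoord_mem_Icc_iff hT ht).2 hy)
  rw [logPullback, kernelPullback, fker, if_pos hmem, max_eq_right hle, min_eq_left hle]
  simp only [logCoord, sub_sub_cancel, abs_exp, Pi.smul_apply, smul_eq_mul, expKernel,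
    abs_sub_comm x y, abs_of_nonneg (sub_nonneg.2 hxy), ← sqrt_exp_mul_sqrt_exp_mul_rpow]
  ring

lemma logPullback_fker (hT : 0 < T) (ht : t < T) (hx : x ∈ logInterval T t)
    (hy : y ∈ logInterval T t) :
    logPullback T (fker T α t) x y =
      ((1 / (2 * √(lam T α t))) • expKernel (α - 1 / 2)) x y := by
  rcases le_total x y with hxy | hyx
  · exact logPullback_fker_of_le hT ht hx hy hxy
  · have swapped := logPullback_fker_of_le (α := α) hT ht hy hx hyx
    simp only [logPullback, kernelPullback, Pi.smul_apply, expKernel, abs_sub_comm y x] at swapped ⊢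
    rw [fker_comm, mul_comm √_ √_, swapped]

lemma logPullback_contr_fker (hT : 0 < T) (ht : t < T) (hx : x ∈ logInterval T t)
    (hy : y ∈ logInterval T t) :
    logPullback T (contr T (fker T α t) (fker T α t)) x y =
      ((1 / (2 * √(lam T α t)) * (1 / (2 * √(lam T α t)))) •
        kernelContr (logInterval T t) (expKernel (α - 1 / 2)) (expKernel (α - 1 / 2))) x y := by
  rw [logPullback_contr hT ht fun _ _ => fker_eq_zero, ← kernelContr_smul_smul]
  exact kernelContr_congr (measurableSet_logInterval T t)
    (fun _ hx _ hy => logPullback_fker hT ht hx hy)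
    (fun _ hx _ hy => logPullback_fker hT ht hx hy) hx hy

lemma normSq_fker (hT : 0 < T) (ht : t < T) :
    normSq T (fker T α t) = (1 / (2 * √(lam T α t))) ^ 2 *
      kernelInner (logInterval T t) (expKernel (α - 1 / 2)) (expKernel (α - 1 / 2)) := by
  have pullback_eq := fun x hx y hy =>
    logPullback_fker (α := α) (x := x) (y := y) hT ht hx hy
  rw [normSq, ip_eq_kernelInner_logPullback hT ht fun _ _ => fker_eq_zero,
    kernelInner_congr (measurableSet_logInterval T t) pullback_eq pullback_eq,
    kernelInner_smul_smul]
  ring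

lemma ip_contr_fker_fker (hT : 0 < T) (ht : t < T) :
    ip T (contr T (fker T α t) (fker T α t)) (fker T α t) = (1 / (2 * √(lam T α t))) ^ 3 *
      kernelInner (logInterval T t)
        (kernelContr (logInterval T t) (expKernel (α - 1 / 2)) (expKernel (α - 1 / 2)))
        (expKernel (α - 1 / 2)) := by
  rw [ip_eq_kernelInner_logPullback hT ht fun _ _ => fker_eq_zero,
    kernelInner_congr (measurableSet_logInterval T t)
      (fun x hx y hy => logPullback_contr_fker hT ht hx hy)
      (fun x hx y hy => logPullback_fker hT ht hx hy),
    kernelInner_smul_smul]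
  ring

lemma normSq_contr_fker (hT : 0 < T) (ht : t < T) :
    normSq T (contr T (fker T α t) (fker T α t)) = (1 / (2 * √(lam T α t))) ^ 4 *
      kernelInner (logInterval T t)
        (kernelContr (logInterval T t) (expKernel (α - 1 / 2)) (expKernel (α - 1 / 2)))
        (kernelContr (logInterval T t) (expKernel (α - 1 / 2)) (expKernel (α - 1 / 2))) := by
  have pullback_eq := fun x hx y hy =>
    logPullback_contr_fker (α := α) (x := x) (y := y) hT ht hx hy
  rw [normSq, ip_eq_kernelInner_logPullback hT ht fun _ _ => contr_fker_eq_zero,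
    kernelInner_congr (measurableSet_logInterval T t) pullback_eq pullback_eq,
    kernelInner_smul_smul]
  ring

end LogCoordinates

section Asymptotics

variable {T α κ : ℝ} {Q : ℝ → ℝ → ℝ}

lemma tendsto_neg_log_sub (T : ℝ) : Tendsto (fun t => -log (T - t)) (𝓝[<] T) atTop := by
  refine tendsto_neg_atBot_atTop.comp (tendsto_log_nhdsGT_zero.comp ?_)
  exact tendsto_nhdsWithin_iff.2
    ⟨((continuous_const.sub continuous_id).tendsto' T 0 (sub_self T)).mono_left nhdsWithin_le_nhds,
      eventually_mem_nhdsWithin.mono fun _ ht => Set.mem_Ioi.2 (sub_pos.2 ht)⟩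

lemma eventually_neg_log_sub_eq (hα : 1 / 2 < α) (T : ℝ) :
    ∀ᶠ t in 𝓝[<] T, -log (T - t) = (2 * α - 1) * lam T α t := by
  filter_upwards [(tendsto_neg_log_sub T).eventually_ge_atTop 0] with t ht
  rw [lam, ← abs_neg, abs_of_nonneg ht, mul_div_cancel₀ _ (by linarith)]

lemma tendsto_lam (hα : 1 / 2 < α) (T : ℝ) : Tendsto (lam T α) (𝓝[<] T) atTop := by
  refine (tendsto_const_mul_atTop_of_pos (by linarith : 0 < 2 * α - 1)).1 ?_
  exact (tendsto_neg_log_sub T).congr' (eventually_neg_log_sub_eq hα T)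

lemma HasLinearGrowth.isBigO_sub_mul_lam (hQ : HasLinearGrowth Q κ) (hα : 1 / 2 < α) (T : ℝ) :
    (fun t => Q (-log T) (-log (T - t)) - κ * (2 * α - 1) * lam T α t) =O[𝓝[<] T]
      fun _ => (1 : ℝ) := by
  obtain ⟨M, hM⟩ := hQ
  refine Asymptotics.IsBigO.of_bound (M + |κ * log T|) ?_
  filter_upwards [eventually_neg_log_sub_eq hα T,
    (tendsto_neg_log_sub T).eventually_ge_atTop (-log T)] with t log_eq ht
  calc ‖Q (-log T) (-log (T - t)) - κ * (2 * α - 1) * lam T α t‖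
      = |Q (-log T) (-log (T - t)) - κ * (-log (T - t) - -log T) + κ * log T| := by
        rw [Real.norm_eq_abs, mul_assoc, ← log_eq]
        ring_nf
    _ ≤ M + |κ * log T| := (abs_add_le _ _).trans (add_le_add_left (hM ht) _)
    _ = (M + |κ * log T|) * ‖(1 : ℝ)‖ := by rw [norm_one, mul_one]

lemma tendsto_div_zero_of_isBigO_one {ι : Type*} {l : Filter ι} {f g : ι → ℝ}
    (hf : f =O[l] fun _ => (1 : ℝ)) (hg : Tendsto g l atTop) :
    Tendsto (fun i => f i / g i) l (𝓝 0) :=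
  (hf.trans_isLittleO <| Asymptotics.isLittleO_const_left.2 <|
    Or.inr <| tendsto_norm_atTop_atTop.comp hg).tendsto_div_nhds_zero

lemma tendsto_div_of_isBigO_sub_const_mul {ι : Type*} {l : Filter ι} {f g : ι → ℝ}
    (hfg : (fun i => f i - κ * g i) =O[l] fun _ => (1 : ℝ)) (hg : Tendsto g l atTop) :
    Tendsto (fun i => f i / g i) l (𝓝 κ) := by
  rw [← zero_add κ]
  refine ((tendsto_div_zero_of_isBigO_one hfg hg).add_const κ).congr' ?_
  filter_upwards [hg.eventually_ne_atTop 0] with i hi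
  field_simp
  ring

lemma one_div_two_mul_sqrt_sq {l : ℝ} (hl : 0 ≤ l) : (1 / (2 * √l)) ^ 2 = 1 / (4 * l) := by
  rw [div_pow, mul_pow, sq_sqrt hl]
  norm_num

lemma tendsto_lam_mul_normSq_contr_fker (hT : 0 < T) (hα : 1 / 2 < α) :
    Tendsto (fun t => lam T α t * normSq T (contr T (fker T α t) (fker T α t)))
      (𝓝[<] T) (𝓝 (5 / (4 * (2 * α - 1) ^ 2))) := by
  have hb : 0 < α - 1 / 2 := by linarith
  have growth := tendsto_div_of_isBigO_sub_const_mul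
    ((hasLinearGrowth_kernelInner_kernelContr_kernelContr_expKernel hb).isBigO_sub_mul_lam hα T)
    (tendsto_lam hα T)
  convert (growth.div_const 16).congr' ?_ using 2
  · rw [show α - 1 / 2 = (2 * α - 1) / 2 by ring]
    have : 2 * α - 1 ≠ 0 := by linarith
    field_simp
    norm_num
  · filter_upwards [(tendsto_lam hα T).eventually_gt_atTop 0, self_mem_nhdsWithin] with t hl ht
    rw [normSq_contr_fker hT ht, pow_mul _ 2 2, one_div_two_mul_sqrt_sq hl.le, logInterval]
    field_simp
    norm_num

lemma tendsto_sqrt_lam_mul_ip_contr_fker_fker (hT : 0 < T) (hα : 1 / 2 < α) :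
    Tendsto (fun t => √(lam T α t) * ip T (contr T (fker T α t) (fker T α t)) (fker T α t))
      (𝓝[<] T) (𝓝 (3 / (4 * (2 * α - 1)))) := by
  have hb : 0 < α - 1 / 2 := by linarith
  have growth := tendsto_div_of_isBigO_sub_const_mul
    ((hasLinearGrowth_kernelInner_kernelContr_expKernel hb).isBigO_sub_mul_lam hα T)
    (tendsto_lam hα T)
  convert (growth.div_const 8).congr' ?_ using 2
  · rw [show α - 1 / 2 = (2 * α - 1) / 2 by ring]
    have : 2 * α - 1 ≠ 0 := by linarith
    field_simp
    norm_num
  · filter_upwards [(tendsto_lam hα T).eventually_gt_atTop 0, self_mem_nhdsWithin] with t hl ht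
    rw [ip_contr_fker_fker hT ht, pow_succ, one_div_two_mul_sqrt_sq hl.le, logInterval]
    field_simp
    ring

lemma tendsto_sqrt_lam_mul_two_mul_normSq_fker_sub_one (hT : 0 < T) (hα : 1 / 2 < α) :
    Tendsto (fun t => √(lam T α t) * (2 * normSq T (fker T α t) - 1)) (𝓝[<] T) (𝓝 0) := by
  have hb : 0 < α - 1 / 2 := by linarith
  have slope : 1 / (α - 1 / 2) * (2 * α - 1) = 2 := by
    rw [show 2 * α - 1 = 2 * (α - 1 / 2) by ring, one_div_mul_eq_div,
      mul_div_cancel_right₀ _ hb.ne']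
  have growth := (hasLinearGrowth_kernelInner_expKernel hb).isBigO_sub_mul_lam hα T
  have sqrt_lam : Tendsto (fun t => 2 * √(lam T α t)) (𝓝[<] T) atTop :=
    (tendsto_sqrt_atTop.comp (tendsto_lam hα T)).const_mul_atTop two_pos
  refine (tendsto_div_zero_of_isBigO_one growth sqrt_lam).congr' ?_
  filter_upwards [(tendsto_lam hα T).eventually_gt_atTop 0, self_mem_nhdsWithin] with t hl ht
  rw [normSq_fker hT ht, one_div_two_mul_sqrt_sq hl.le, logInterval, slope]
  have hs := sq_sqrt hl.le
  field_simp
  rw [hs]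
  ring

lemma sqrt_five_div_div_three_div {c : ℝ} (hc : 0 < c) :
    √(5 / (4 * c ^ 2)) / (3 / (4 * c)) = 2 * √5 / 3 := by
  rw [sqrt_div' _ (by positivity), show 4 * c ^ 2 = (2 * c) ^ 2 by ring, sqrt_sq (by positivity)]
  field_simp
  norm_num

end Asymptotics

theorem stmt_18 (T α : ℝ) (hT : 0 < T) (hα : 1 / 2 < α) :
    Tendsto (fun t => Real.sqrt (normSq T (contr T (fker T α t) (fker T α t))) /
        ip T (contr T (fker T α t) (fker T α t)) (fker T α t))
      (𝓝[<] T) (𝓝 (2 * Real.sqrt 5 / 3))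
    ∧
    Tendsto (fun t => (2 * normSq T (fker T α t) - 1) /
        ip T (contr T (fker T α t) (fker T α t)) (fker T α t))
      (𝓝[<] T) (𝓝 0) := by
  have two_mul_sub_one_pos : 0 < 2 * α - 1 := by linarith
  have lam_pos := (tendsto_lam hα T).eventually_gt_atTop 0
  have ip_lim := tendsto_sqrt_lam_mul_ip_contr_fker_fker hT hα
  have ip_lim_ne : 3 / (4 * (2 * α - 1)) ≠ 0 := by positivity
  constructor
  · have ratio_lim := (tendsto_lam_mul_normSq_contr_fker hT hα).sqrt.div ip_lim ip_lim_ne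
    rw [sqrt_five_div_div_three_div two_mul_sub_one_pos] at ratio_lim
    refine ratio_lim.congr' (lam_pos.mono fun t hl => ?_)
    rw [Pi.div_apply, sqrt_mul hl.le, mul_div_mul_left _ _ (sqrt_ne_zero'.2 hl)]
  · have ratio_lim := (tendsto_sqrt_lam_mul_two_mul_normSq_fker_sub_one hT hα).div ip_lim ip_lim_ne
    rw [zero_div] at ratio_lim
    refine ratio_lim.congr' (lam_pos.mono fun t hl => ?_)
    rw [Pi.div_apply, mul_div_mul_left _ _ (sqrt_ne_zero'.2 hl)]
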